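/- Let (X,d) be a Polish space and f a continuous semi-flow on X such that f is topologically quasi-transitive and the Birkhoff recurrent points of f are dense in X. Then the following are equivalent: (i) there exist x, y ∈ X with closure(O₊(f,x)) ∩ closure(O₊(f,y)) = ∅; (ii) (X,f) is not minimal, i.e., there exists y ∈ X with closure(O₊(f,y)) ≠ X. -/

import Mathlib

open Filter Topology Metric Set TopologicalSpace

/-- `f` is a continuous semi-flow on `X`: jointly continuous on `[0,∞) × X`,
`f 0 x = x`, and `f s (f t x) = f (s+t) x` for `s, t ≥ 0`. -/
def IsSemiflow {X : Type*} [MetricSpace X] (f : ℝ → X → X) : Prop :=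
  ContinuousOn (fun p : ℝ × X => f p.1 p.2) (Set.Ici 0 ×ˢ Set.univ) ∧
  (∀ x, f 0 x = x) ∧
  (∀ s t : ℝ, 0 ≤ s → 0 ≤ t → ∀ x, f s (f t x) = f (s + t) x)

/-- the forward orbit `O₊(f,x) = {f t x : t ≥ 0}`. -/
def posOrbit {X : Type*} [MetricSpace X] (f : ℝ → X → X) (x : X) : Set X :=
  (fun t => f t x) '' Set.Ici (0 : ℝ)

/-- `x` is Birkhoff recurrent for `f`. -/
def BirkhoffRecurrent {X : Type*} [MetricSpace X] (f : ℝ → X → X) (x : X) : Prop :=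
  ∀ ε > (0:ℝ), ∃ T > (0:ℝ), ∀ τ ≥ (0:ℝ), ∀ υ ≥ (0:ℝ),
    ∃ t : ℝ, τ < t ∧ t < τ + T ∧ dist (f υ x) (f t x) < ε

/-- `f` is topologically quasi-transitive: some forward orbit is dense. -/
def QuasiTransitive {X : Type*} [MetricSpace X] (f : ℝ → X → X) : Prop :=
  ∃ x : X, Dense (posOrbit f x)

/-- `(X,f)` is chaotic: quasi-transitive, Birkhoff recurrent points dense, and
two motions far away from each other. -/
def Chaotic {X : Type*} [MetricSpace X] (f : ℝ → X → X) : Prop :=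
  QuasiTransitive f ∧ Dense {x : X | BirkhoffRecurrent f x} ∧
  ∃ x y : X, closure (posOrbit f x) ∩ closure (posOrbit f y) = ∅

/-!
A Birkhoff recurrent point `x` returns near itself within a bounded time `T`, starting from any
point of its orbit. By compactness of `[0, T]`, the set of points that reach a given closed ball
around `x` within time `T` is closed, so this passes to the whole orbit closure of `x`: every `z` in
it has `x` in its own orbit closure, i.e. the orbit closure of `x` is minimal. Hence an orbit
closure that meets those of all Birkhoff recurrent points contains all of these points, and it is
the whole space if they are dense.
-/

section

variable {X : Type*} [MetricSpace X] {f : ℝ → X → X} {x y z : X}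

namespace IsSemiflow

theorem continuous_apply (hf : IsSemiflow f) {t : ℝ} (ht : 0 ≤ t) : Continuous (f t) :=
  hf.1.comp_continuous (Continuous.prodMk_right t) fun x => ⟨ht, mem_univ x⟩

theorem mem_posOrbit_self (hf : IsSemiflow f) (x : X) : x ∈ posOrbit f x :=
  ⟨0, self_mem_Ici, hf.2.1 x⟩

theorem mapsTo_posOrbit (hf : IsSemiflow f) {t : ℝ} (ht : 0 ≤ t) (x : X) :
    MapsTo (f t) (posOrbit f x) (posOrbit f x) := by
  rintro _ ⟨s, hs, rfl⟩
  exact ⟨t + s, add_nonneg ht hs, (hf.2.2 t s ht hs x).symm⟩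

theorem closure_posOrbit_subset (hf : IsSemiflow f) (hz : z ∈ closure (posOrbit f y)) :
    closure (posOrbit f z) ⊆ closure (posOrbit f y) := by
  refine closure_minimal ?_ isClosed_closure
  rintro _ ⟨t, ht, rfl⟩
  exact (hf.mapsTo_posOrbit ht y).closure (hf.continuous_apply ht) hz

theorem isClosed_setOf_exists_mem (hf : IsSemiflow f) {K : Set ℝ} (hK : IsCompact K)
    (hK₀ : K ⊆ Ici 0) {C : Set X} (hC : IsClosed C) : IsClosed {z | ∃ t ∈ K, f t z ∈ C} := by
  have : CompactSpace K := isCompact_iff_compactSpace.mp hK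
  have hcont : Continuous fun p : K × X => f p.1 p.2 :=
    hf.1.comp_continuous (f := fun p : K × X => ((p.1 : ℝ), p.2)) (by fun_prop)
      fun p => ⟨hK₀ p.1.2, mem_univ p.2⟩
  have himage : Prod.snd '' ((fun p : K × X => f p.1 p.2) ⁻¹' C) = {z | ∃ t ∈ K, f t z ∈ C} := by
    ext z
    simp
  exact himage ▸ isClosedMap_snd_of_compactSpace _ (hC.preimage hcont)

end IsSemiflow

namespace BirkhoffRecurrent

theorem exists_forall_exists_mem_closedBall (hx : BirkhoffRecurrent f x) (hf : IsSemiflow f)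
    {ε : ℝ} (hε : 0 < ε) :
    ∃ T, ∀ z ∈ posOrbit f x, ∃ t ∈ Icc 0 T, f t z ∈ closedBall x ε := by
  obtain ⟨T, -, hreturn⟩ := hx ε hε
  refine ⟨T, ?_⟩
  rintro _ ⟨s, hs, rfl⟩
  obtain ⟨t, hst, htT, hdist⟩ := hreturn s hs 0 le_rfl
  have hflow : f (t - s) (f s x) = f t x := by
    rw [hf.2.2 _ _ (sub_nonneg.2 hst.le) hs, sub_add_cancel]
  refine ⟨t - s, ⟨sub_nonneg.2 hst.le, by linarith⟩, ?_⟩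
  rw [hf.2.1] at hdist
  exact hflow ▸ mem_closedBall'.2 hdist.le

theorem mem_closure_posOrbit (hx : BirkhoffRecurrent f x) (hf : IsSemiflow f)
    (hz : z ∈ closure (posOrbit f x)) : x ∈ closure (posOrbit f z) := by
  refine mem_closure_iff_nhds_basis nhds_basis_closedBall |>.2 fun ε hε => ?_
  obtain ⟨T, hT⟩ := hx.exists_forall_exists_mem_closedBall hf hε
  have hclosed : IsClosed {z | ∃ t ∈ Icc 0 T, f t z ∈ closedBall x ε} :=
    hf.isClosed_setOf_exists_mem isCompact_Icc Icc_subset_Ici_self isClosed_closedBall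
  obtain ⟨t, ht, hball⟩ := closure_minimal hT hclosed hz
  exact ⟨f t z, mem_image_of_mem _ ht.1, hball⟩

theorem mem_closure_posOrbit_of_inter_nonempty (hx : BirkhoffRecurrent f x) (hf : IsSemiflow f)
    (h : (closure (posOrbit f x) ∩ closure (posOrbit f y)).Nonempty) :
    x ∈ closure (posOrbit f y) := by
  obtain ⟨z, hzx, hzy⟩ := h
  exact hf.closure_posOrbit_subset hzy (hx.mem_closure_posOrbit hf hzx)

end BirkhoffRecurrent

theorem IsSemiflow.closure_posOrbit_eq_univ_iff (hf : IsSemiflow f)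
    (hrec : Dense {x : X | BirkhoffRecurrent f x}) :
    closure (posOrbit f y) = univ ↔
      ∀ x, (closure (posOrbit f x) ∩ closure (posOrbit f y)).Nonempty := by
  constructor
  · intro hy x
    exact ⟨x, subset_closure (hf.mem_posOrbit_self x), hy ▸ mem_univ x⟩
  · intro hmeet
    have hsubset : {x | BirkhoffRecurrent f x} ⊆ closure (posOrbit f y) := fun x hx =>
      hx.mem_closure_posOrbit_of_inter_nonempty hf (hmeet x)
    exact (dense_closure.1 (hrec.mono hsubset)).closure_eq

theorem far_away_iff_not_minimal_general (hf : IsSemiflow f)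
    (hrec : Dense {x : X | BirkhoffRecurrent f x}) :
    (∃ x y : X, closure (posOrbit f x) ∩ closure (posOrbit f y) = ∅) ↔
    (∃ y : X, closure (posOrbit f y) ≠ univ) := by
  rw [exists_comm]
  simp only [ne_eq, hf.closure_posOrbit_eq_univ_iff hrec, not_forall, not_nonempty_iff_eq_empty]

end

/-- under quasi-transitivity and density of Birkhoff recurrent
points, the existence of two far-away motions is equivalent to
non-minimality. -/
theorem far_away_iff_not_minimal {X : Type*} [MetricSpace X] [CompleteSpace X]
    [SeparableSpace X] (f : ℝ → X → X) (hf : IsSemiflow f)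
    (h1 : QuasiTransitive f) (h2 : Dense {x : X | BirkhoffRecurrent f x}) :
    (∃ x y : X, closure (posOrbit f x) ∩ closure (posOrbit f y) = ∅) ↔
    (∃ y : X, closure (posOrbit f y) ≠ Set.univ) :=
  far_away_iff_not_minimal_general hf h2
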